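/- For every positive integer k, there exists a constant t(k) such that every graph containing no triangle, no induced cycle of length 4, and no induced cycle of length divisible by k has chromatic number at most t(k). -/

import Mathlib

/-!
Excluding triangles and induced four-cycles leaves a graph `G` without any four-cycle. If `G` has
large chromatic number, then its degeneracy `d` is large, and some set `S` of vertices is
`d`-degenerate with minimum degree at least `d` (`exists_core`). Orienting `S` with out-degrees at
most `d`, at least half of its vertices have degree at most `4 * d`. On these, Shearer's argument
for triangle-free graphs (`exists_indep`) yields an independent set `A` with `d * |A|` larger than
any prescribed multiple of `|S|`.

Now colour the vertices uniformly at random with `16 * d` colours and keep, outside `A`, only the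
vertices of colours `0` and `1`; call the kept set `B`, of expected size at most `|S| / (8 * d)`.
With probability bounded below by a constant, a vertex `a ∈ A` has exactly one neighbour of each of
the two colours and these two have no kept out-neighbours apart from each other: `a` is a clean
link between them (`card_good`). So for some colouring there are far more clean links than vertices
of `B` (`exists_sample`). Each clean link is regarded as an edge of a bipartite graph on `B`;
absence of four-cycles makes distinct links distinct edges, so this link graph has a subgraph of
large minimum degree (`card_good_le_of_degen`).

A bipartite graph of large minimum degree contains a cycle of length `L` divisible by `k`
(`exists_cycle_of_degree`), by closing a path of adjustable even length between two consecutive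
breadth-first levels through the tree. Cleanness of the links makes the subdivision of this cycle an
induced cycle of `G`, of length `2 * L` (`exists_induced_cycle_of_link`), and `k ∣ 2 * L`.
-/

open SimpleGraph

/-- The chromatic number of `G`, as a natural number. -/
noncomputable def chi {V : Type} (G : SimpleGraph V) : ℕ := G.chromaticNumber.toNat

/-- The chromatic number of the subgraph of `G` induced by the vertex set `A`. -/
noncomputable def chiSet {V : Type} (G : SimpleGraph V) (A : Set V) : ℕ :=
  (G.induce A).chromaticNumber.toNat

/-- `G` contains no induced cycle of length `n`: there is no graph embedding
(induced-subgraph embedding) of the `n`-cycle into `G`. -/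
def NoInducedCycle {V : Type} (G : SimpleGraph V) (n : ℕ) : Prop :=
  IsEmpty (cycleGraph n ↪g G)

/-- The `k`-th level of the `v`-levelling: vertices at distance exactly `k` from `v`. -/
def level {V : Type} (G : SimpleGraph V) (v : V) (k : ℕ) : Set V :=
  {x | G.Reachable v x ∧ G.dist v x = k}

/-- `N(S)`: the set of vertices adjacent to at least one vertex of `S`. -/
def neighborsOf {V : Type} (G : SimpleGraph V) (S : Set V) : Set V :=
  {x | ∃ s ∈ S, G.Adj s x}

/-- A walk is an induced path: it is a path, and its vertex set induces
no edges other than the path edges. -/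
def IsInducedPathW {V : Type} {G : SimpleGraph V} {u w : V} (p : G.Walk u w) : Prop :=
  p.IsPath ∧ ∀ a ∈ p.support, ∀ b ∈ p.support, G.Adj a b → s(a, b) ∈ p.edges

/-- A Parity Changing Path (PCP) of order `ℓ` in `G`: regular blocks `block 0, …, block (ℓ-1)`
(vertex sets of induced subgraphs), a last block `lastBlock`, induced paths `path i` of
length at least `2` from `y i ∈ block i` to `x i.succ`, with the prescribed shared vertices,
disjointness and edge conditions, an induced odd and an induced even `x i`–`y i` path inside
each regular block, `lastBlock` connected and each regular block `4`-colorable. -/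
structure PCP {V : Type} (G : SimpleGraph V) (ℓ : ℕ) where
  block : Fin ℓ → Set V
  lastBlock : Set V
  x : Fin (ℓ + 1) → V
  y : Fin ℓ → V
  path : (i : Fin ℓ) → G.Walk (y i) (x i.succ)
  x_mem : ∀ i : Fin ℓ, x i.castSucc ∈ block i
  y_mem : ∀ i : Fin ℓ, y i ∈ block i
  xlast_mem : x (Fin.last ℓ) ∈ lastBlock
  path_induced : ∀ i, IsInducedPathW (path i)
  path_length : ∀ i, 2 ≤ (path i).length
  blocks_disjoint : ∀ i j, i ≠ j → Disjoint (block i) (block j)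
  block_last_disjoint : ∀ i, Disjoint (block i) lastBlock
  block_path_inter : ∀ i j : Fin ℓ, ∀ w ∈ block i, w ∈ (path j).support →
      (j = i ∧ w = y i) ∨ ((j : ℕ) + 1 = (i : ℕ) ∧ w = x i.castSucc)
  last_path_inter : ∀ j : Fin ℓ, ∀ w ∈ lastBlock, w ∈ (path j).support →
      (j : ℕ) + 1 = ℓ ∧ w = x (Fin.last ℓ)
  paths_disjoint : ∀ i j : Fin ℓ, i ≠ j → ∀ w,
      w ∈ (path i).support → w ∈ (path j).support → False
  edges_within : ∀ a b : V,
      a ∈ (⋃ i, block i) ∪ lastBlock ∪ (⋃ i, {w | w ∈ (path i).support}) →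
      b ∈ (⋃ i, block i) ∪ lastBlock ∪ (⋃ i, {w | w ∈ (path i).support}) →
      G.Adj a b →
      (∃ i, a ∈ block i ∧ b ∈ block i) ∨ (a ∈ lastBlock ∧ b ∈ lastBlock) ∨
        (∃ i, a ∈ (path i).support ∧ b ∈ (path i).support)
  odd_path : ∀ i : Fin ℓ, ∃ p : G.Walk (x i.castSucc) (y i),
      IsInducedPathW p ∧ (∀ w ∈ p.support, w ∈ block i) ∧ Odd p.length
  even_path : ∀ i : Fin ℓ, ∃ p : G.Walk (x i.castSucc) (y i),
      IsInducedPathW p ∧ (∀ w ∈ p.support, w ∈ block i) ∧ Even p.length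
  last_connected : (G.induce lastBlock).Connected
  block_chrom : ∀ i, (G.induce (block i)).chromaticNumber ≤ 4

/-- The origin of a PCP. -/
def PCP.origin {V : Type} {G : SimpleGraph V} {ℓ : ℕ} (P : PCP G ℓ) : V := P.x 0

/-- The vertex set of a PCP. -/
def PCP.support {V : Type} {G : SimpleGraph V} {ℓ : ℕ} (P : PCP G ℓ) : Set V :=
  (⋃ i, P.block i) ∪ P.lastBlock ∪ (⋃ i, {w | w ∈ (P.path i).support})

/-- The leftovers of a PCP: the chromatic number of its last block. -/
noncomputable def PCP.leftovers {V : Type} {G : SimpleGraph V} {ℓ : ℕ} (P : PCP G ℓ) : ℕ :=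
  chiSet G P.lastBlock

/-- A strong PCP: every regular block contains an induced 5-cycle. -/
def PCP.IsStrong {V : Type} {G : SimpleGraph V} {ℓ : ℕ} (P : PCP G ℓ) : Prop :=
  ∀ i : Fin ℓ, ∃ f : cycleGraph 5 ↪g G, ∀ t, f t ∈ P.block i

/-- A PCP lies in the level `N_k` of the `v`-levelling and is rooted there: some vertex
`u' ∈ N_{k-1}` is adjacent to the origin and to no other vertex of the PCP. -/
def PCP.IsRootedInLevel {V : Type} {G : SimpleGraph V} {ℓ : ℕ} (P : PCP G ℓ)
    (v : V) (k : ℕ) : Prop :=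
  P.support ⊆ level G v k ∧
    ∃ u' ∈ level G v (k - 1), G.Adj u' P.origin ∧
      ∀ w ∈ P.support, w ≠ P.origin → ¬ G.Adj u' w

namespace CycMod

variable {V : Type*}

/-! ### Degenerate sets -/

/-- `S` induces a `q`-degenerate subgraph of `G`: every nonempty `T ⊆ S` has a vertex with at
most `q` neighbours inside `T`. Stating this for vertex subsets rather than subgraphs is enough,
since deleting edges only lowers degrees. -/
def Degen (G : SimpleGraph V) (S : Finset V) (q : ℕ) : Prop :=
  open Classical in
  ∀ T ⊆ S, T.Nonempty → ∃ v ∈ T, (T.filter (G.Adj v)).card ≤ q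

open Classical in
/-- A `q`-degenerate set has an orientation with all out-degrees at most `q`. The values of `out`
need not be neighbours, nor lie in `S`; only the size bound and the covering of edges matter. -/
lemma Degen.orient {G : SimpleGraph V} {q : ℕ} (S : Finset V) (h : Degen G S q) :
    ∃ out : V → Finset V, (∀ v ∈ S, (out v).card ≤ q) ∧
      ∀ u ∈ S, ∀ v ∈ S, G.Adj u v → v ∈ out u ∨ u ∈ out v := by
  induction S using Finset.strongInduction with
  | H S ih =>
    rcases S.eq_empty_or_nonempty with rfl | hne
    · exact ⟨fun _ => ∅, by simp, by simp⟩
    obtain ⟨v, hv, hq⟩ := h S subset_rfl hne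
    obtain ⟨out, ho, hadj⟩ := ih (S.erase v) (Finset.erase_ssubset hv)
      (fun T hT => h T (hT.trans (Finset.erase_subset _ _)))
    refine ⟨Function.update out v (S.filter (G.Adj v)), ?_, ?_⟩
    · intro u hu
      by_cases huv : u = v
      · subst huv; simpa using hq
      · rw [Function.update_of_ne huv]; exact ho u (by simp [huv, hu])
    · intro u hu w hw huw
      by_cases huv : u = v
      · subst huv; left; simp [hw, huw]
      by_cases hwv : w = v
      · subst hwv; right; simp [hu, huw.symm]
      rw [Function.update_of_ne huv, Function.update_of_ne hwv]
      exact hadj u (by simp [huv, hu]) w (by simp [hwv, hw]) huw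

open Classical in
lemma sum_degree_le_of_orient {G : SimpleGraph V} {q : ℕ} (S : Finset V) (out : V → Finset V)
    (ho : ∀ v ∈ S, (out v).card ≤ q)
    (hadj : ∀ u ∈ S, ∀ v ∈ S, G.Adj u v → v ∈ out u ∨ u ∈ out v) :
    ∑ v ∈ S, (S.filter (G.Adj v)).card ≤ 2 * q * S.card := by
  have h1 : ∀ v ∈ S, (S.filter (G.Adj v)).card ≤
      (S.filter (fun u => u ∈ out v)).card + (S.filter (fun u => v ∈ out u)).card := by
    intro v hv
    refine (Finset.card_le_card ?_).trans (Finset.card_union_le _ _)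
    intro u hu
    simp only [Finset.mem_filter, Finset.mem_union] at hu ⊢
    have := hadj v hv u hu.1 hu.2
    tauto
  have h2 : ∑ v ∈ S, (S.filter (fun u => v ∈ out u)).card
      = ∑ v ∈ S, (S.filter (fun u => u ∈ out v)).card :=
    Finset.sum_card_bipartiteAbove_eq_sum_card_bipartiteBelow (fun v u => v ∈ out u)
  have h3 : ∑ v ∈ S, (S.filter (fun u => u ∈ out v)).card ≤ S.card * q := by
    rw [← smul_eq_mul]
    refine Finset.sum_le_card_nsmul _ _ _ fun v hv => ?_
    refine (Finset.card_le_card ?_).trans (ho v hv)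
    intro u; simp
  calc _ ≤ _ := Finset.sum_le_sum h1
    _ ≤ _ := by rw [Finset.sum_add_distrib, h2]; linarith

open Classical in
/-- Greedy colouring of a degenerate set. -/
lemma Degen.coloring {G : SimpleGraph V} {q : ℕ} (S : Finset V) (h : Degen G S q) :
    ∃ c : V → Fin (q + 1), ∀ u ∈ S, ∀ v ∈ S, G.Adj u v → c u ≠ c v := by
  induction S using Finset.strongInduction with
  | H S ih =>
    rcases S.eq_empty_or_nonempty with rfl | hne
    · exact ⟨fun _ => 0, by simp⟩
    obtain ⟨v, hv, hq⟩ := h S subset_rfl hne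
    obtain ⟨c, hc⟩ := ih (S.erase v) (Finset.erase_ssubset hv)
      (fun T hT => h T (hT.trans (Finset.erase_subset _ _)))
    obtain ⟨x, hx⟩ : ∃ x, x ∉ (S.filter (G.Adj v)).image c := by
      by_contra! hcon
      have : (Finset.univ : Finset (Fin (q + 1))).card ≤ _ :=
        Finset.card_le_card (fun x _ => hcon x)
      have := this.trans Finset.card_image_le
      simp at this; omega
    have hx' : ∀ u ∈ S, G.Adj v u → c u ≠ x := by
      intro u hu huv e
      exact hx (Finset.mem_image.2 ⟨u, by simp [hu, huv], e⟩)
    refine ⟨Function.update c v x, ?_⟩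
    intro u hu w hw huw
    by_cases huv : u = v
    · subst huv
      rw [Function.update_self, Function.update_of_ne huw.ne']
      exact (hx' w hw huw).symm
    by_cases hwv : w = v
    · subst hwv
      rw [Function.update_self, Function.update_of_ne huw.ne]
      exact hx' u hu huw.symm
    rw [Function.update_of_ne huv, Function.update_of_ne hwv]
    exact hc u (by simp [huv, hu]) w (by simp [hwv, hw]) huw

open Classical in
/-- With `d` the exact degeneracy of `G`, some set `S` is `d`-degenerate and has minimum degree
at least `d`, while `d` is large because `d + 1` colours suffice. -/
lemma exists_core [Fintype V] {G : SimpleGraph V} {D : ℕ}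
    (h : ¬ G.Colorable (D + 1)) :
    ∃ d, D < d ∧ ∃ S : Finset V, S.Nonempty ∧ Degen G S d ∧
      ∀ v ∈ S, d ≤ (S.filter (G.Adj v)).card := by
  have hex : ∃ d, Degen G Finset.univ d := by
    refine ⟨Fintype.card V, fun T _ ⟨v, hv⟩ => ⟨v, hv, Finset.card_le_univ _⟩⟩
  -- Degeneracy `D` would give a colouring with `D + 1` colours.
  have hD : ¬ Degen G Finset.univ D := by
    intro hd
    obtain ⟨c, hc⟩ := hd.coloring
    exact h ⟨Coloring.mk c fun {u v} huv => hc u (Finset.mem_univ _) v (Finset.mem_univ _) huv⟩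
  obtain ⟨d, hd, hmin⟩ : ∃ d, Degen G Finset.univ d ∧ ∀ m < d, ¬ Degen G Finset.univ m :=
    ⟨Nat.find hex, Nat.find_spec hex, fun m h => Nat.find_min hex h⟩
  have hlt : D < d := by
    by_contra! hle
    apply hD
    intro T hT hne
    obtain ⟨v, hv, h'⟩ := hd T hT hne
    exact ⟨v, hv, h'.trans hle⟩
  have hmin := hmin (d - 1) (by omega)
  unfold Degen at hmin
  push Not at hmin
  obtain ⟨S, -, hne, hS⟩ := hmin
  refine ⟨d, hlt, S, hne, fun T _ => hd T (Finset.subset_univ _), ?_⟩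
  intro v hv
  have := hS v hv
  omega

/-! ### Large independent sets in triangle-free graphs -/

open Classical in
/-- The average size of a subset of `X` is half the size of `X`. -/
lemma sum_card_powerset (X : Finset V) : 2 * ∑ Y ∈ X.powerset, Y.card = X.card * 2 ^ X.card := by
  have h : ∑ Y ∈ X.powerset, Y.card = ∑ Y ∈ X.powerset, (X \ Y).card := by
    refine Finset.sum_bij' (fun Y _ => X \ Y) (fun Y _ => X \ Y) ?_ ?_ ?_ ?_ ?_ <;>
      intro Y hY <;> simp only [Finset.mem_powerset] at * <;> simp [hY]
  have h2 : ∑ Y ∈ X.powerset, Y.card + ∑ Y ∈ X.powerset, (X \ Y).card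
      = X.card * 2 ^ X.card := by
    rw [← Finset.sum_add_distrib, ← Finset.card_powerset, mul_comm, ← smul_eq_mul]
    refine Finset.sum_eq_card_nsmul fun Y hY => ?_
    rw [add_comm]
    exact Finset.card_sdiff_add_card_eq_card (Finset.mem_powerset.1 hY)
  omega

/-- The local estimate in Shearer's argument: either `x` is small and `Δ` alone beats
`M * (1 + 2 ^ x)`, or `x ≥ 4 * M` and the term `x * 2 ^ x` does. -/
lemma shearer_arith (M Δ x : ℕ) (hΔ : M * (1 + 2 ^ (4 * M)) ≤ Δ) :
    2 * (M * (1 + 2 ^ x)) ≤ 2 * Δ + x * 2 ^ x := by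
  have h1 : 1 ≤ 2 ^ x := Nat.one_le_two_pow
  rcases le_total x (4 * M) with h | h
  · have : 2 ^ x ≤ 2 ^ (4 * M) := Nat.pow_le_pow_right (by norm_num) h
    nlinarith
  · have : (4 * M) * 2 ^ x ≤ x * 2 ^ x := Nat.mul_le_mul_right _ h
    nlinarith

open Classical in
/-- Triangle-free graphs of bounded degree have independent sets larger than the greedy bound by
an arbitrary factor `M`, as soon as the degree bound `Δ` is large in terms of `M`. The proof is
Shearer's: for a uniformly random independent set `W`, the weight
`w v W = Δ * [v ∈ W] + |N(v) ∩ W|` has expectation at least `M` at every vertex, even conditionally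
on the part of `W` outside the closed neighbourhood of `v`. -/
lemma exists_indep [Fintype V] {G : SimpleGraph V} (hG : G.CliqueFree 3) (A : Finset V)
    (M Δ : ℕ) (hΔ : M * (1 + 2 ^ (4 * M)) ≤ Δ)
    (hA : ∀ v ∈ A, (A.filter (G.Adj v)).card ≤ Δ) :
    ∃ W ⊆ A, (∀ u ∈ W, ∀ v ∈ W, ¬ G.Adj u v) ∧ M * A.card ≤ 2 * Δ * W.card := by
  set I := A.powerset.filter (fun W => ∀ u ∈ W, ∀ v ∈ W, ¬ G.Adj u v) with hI
  have htri : ∀ a b c, G.Adj a b → G.Adj a c → ¬ G.Adj b c := by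
    intro a b c h1 h2 h3
    exact hG {a, b, c} (is3Clique_triple_iff.2 ⟨h1, h2, h3⟩)
  let w : V → Finset V → ℕ := fun v W => (if v ∈ W then Δ else 0) + (W.filter (G.Adj v)).card
  have key : ∀ v ∈ A, M * I.card ≤ ∑ W ∈ I, w v W := by
    intro v hv
    let φ : Finset V → Finset V := fun W => W.filter (fun u => u ≠ v ∧ ¬ G.Adj v u)
    rw [← Finset.sum_fiberwise I φ, Finset.card_eq_sum_card_fiberwise (f := φ) (t := Finset.univ)
      (by simp), Finset.mul_sum]
    refine Finset.sum_le_sum fun S _ => ?_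
    rcases (I.filter (fun W => φ W = S)).eq_empty_or_nonempty with he | ⟨W0, hW0⟩
    · rw [he]; simp
    have hW0I : W0 ∈ I := (Finset.mem_filter.1 hW0).1
    have hW0S : φ W0 = S := (Finset.mem_filter.1 hW0).2
    simp only [hI, Finset.mem_filter, Finset.mem_powerset] at hW0I
    have hSA : ∀ u ∈ S, u ∈ A ∧ u ≠ v ∧ ¬ G.Adj v u := by
      intro u hu
      rw [← hW0S] at hu
      simp only [φ, Finset.mem_filter] at hu
      exact ⟨hW0I.1 hu.1, hu.2⟩
    have hSi : ∀ u ∈ S, ∀ u' ∈ S, ¬ G.Adj u u' := by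
      intro u hu u' hu'
      rw [← hW0S] at hu hu'
      exact hW0I.2 u (Finset.mem_filter.1 hu).1 u' (Finset.mem_filter.1 hu').1
    set X := A.filter (fun u => G.Adj v u ∧ ∀ s ∈ S, ¬ G.Adj u s) with hX
    have hXm : ∀ u ∈ X, u ∈ A ∧ G.Adj v u ∧ ∀ s ∈ S, ¬ G.Adj u s := by
      intro u hu; simpa [hX] using hu
    have hvS : v ∉ S := fun h => (hSA v h).2.1 rfl
    -- For a fixed trace `S` outside the closed neighbourhood of `v`, the independent sets are
    -- `S ∪ {v}` and all `S ∪ Y` with `Y ⊆ X`; the latter are independent as `G` is triangle-free.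
    have hfib : I.filter (fun W => φ W = S) =
        insert (insert v S) (X.powerset.image (fun Y => S ∪ Y)) := by
      ext W
      simp only [Finset.mem_filter, Finset.mem_insert, Finset.mem_image, Finset.mem_powerset, hI]
      constructor
      · rintro ⟨⟨hWA, hWi⟩, hφ⟩
        have hmem : ∀ u, u ∈ S ↔ u ∈ W ∧ u ≠ v ∧ ¬ G.Adj v u := by
          intro u; rw [← hφ]; simp [φ]
        by_cases hvW : v ∈ W
        · left
          ext u
          rw [Finset.mem_insert, hmem]
          constructor
          · intro hu
            have := hWi v hvW u hu
            tauto
          · rintro (rfl | h)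
            · exact hvW
            · exact h.1
        · right
          refine ⟨W.filter (G.Adj v), ?_, ?_⟩
          · intro u hu
            simp only [Finset.mem_filter, hX] at hu ⊢
            exact ⟨hWA hu.1, hu.2, fun s hs => hWi u hu.1 s ((hmem s).1 hs).1⟩
          · ext u
            rw [Finset.mem_union, hmem, Finset.mem_filter]
            constructor
            · rintro (h | h)
              · exact h.1
              · exact h.1
            · intro h
              have : u ≠ v := fun e => hvW (e ▸ h)
              tauto
      · rintro (rfl | ⟨Y, hY, rfl⟩)
        · refine ⟨⟨?_, ?_⟩, ?_⟩
          · intro u hu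
            rcases Finset.mem_insert.1 hu with rfl | hu
            · exact hv
            · exact (hSA u hu).1
          · intro u hu u' hu'
            rcases Finset.mem_insert.1 hu with e | h1 <;>
              rcases Finset.mem_insert.1 hu' with e' | h2
            · rw [e, e']; exact G.loopless.irrefl _
            · rw [e]; exact (hSA u' h2).2.2
            · rw [e']; exact fun h => (hSA u h1).2.2 h.symm
            · exact hSi u h1 u' h2
          · ext u
            simp only [φ, Finset.mem_filter, Finset.mem_insert]
            constructor
            · tauto
            · intro h
              exact ⟨Or.inr h, (hSA u h).2⟩
        · refine ⟨⟨?_, ?_⟩, ?_⟩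
          · intro u hu
            rcases Finset.mem_union.1 hu with hu | hu
            · exact (hSA u hu).1
            · exact (hXm u (hY hu)).1
          · intro u hu u' hu'
            rcases Finset.mem_union.1 hu with hu | hu <;>
              rcases Finset.mem_union.1 hu' with hu' | hu'
            · exact hSi u hu u' hu'
            · exact fun h => (hXm u' (hY hu')).2.2 u hu h.symm
            · exact (hXm u (hY hu)).2.2 u' hu'
            · exact htri v u u' (hXm u (hY hu)).2.1 (hXm u' (hY hu')).2.1
          · ext u
            simp only [φ, Finset.mem_filter, Finset.mem_union]
            constructor
            · rintro ⟨h | h, h1, h2⟩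
              · exact h
              · exact absurd (hXm u (hY h)).2.1 h2
            · intro h
              exact ⟨Or.inl h, (hSA u h).2⟩
    have hni : insert v S ∉ X.powerset.image (fun Y => S ∪ Y) := by
      intro h
      obtain ⟨Y, hY, e⟩ := Finset.mem_image.1 h
      have : v ∈ S ∪ Y := by rw [e]; simp
      rcases Finset.mem_union.1 this with h | h
      · exact hvS h
      · exact G.loopless.irrefl _ (hXm v (Finset.mem_powerset.1 hY h)).2.1
    have hrec : ∀ Y ∈ X.powerset, (S ∪ Y).filter (G.Adj v) = Y := by
      intro Y hY
      ext u
      rw [Finset.mem_filter, Finset.mem_union]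
      constructor
      · rintro ⟨h | h, h'⟩
        · exact absurd h' (hSA u h).2.2
        · exact h
      · intro h
        exact ⟨Or.inr h, (hXm u (Finset.mem_powerset.1 hY h)).2.1⟩
    have hinj : Set.InjOn (fun Y => S ∪ Y) (X.powerset : Set (Finset V)) := by
      intro Y hY Y' hY' e
      have e' : S ∪ Y = S ∪ Y' := e
      rw [← hrec Y hY, e', hrec Y' hY']
    rw [hfib, Finset.sum_insert hni, Finset.card_insert_of_notMem hni,
      Finset.sum_image hinj, Finset.card_image_of_injOn hinj, Finset.card_powerset]
    have h1 : Δ ≤ w v (insert v S) := by simp [w]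
    have h2 : ∑ Y ∈ X.powerset, Y.card ≤ ∑ Y ∈ X.powerset, w v (S ∪ Y) := by
      refine Finset.sum_le_sum fun Y hY => ?_
      simp only [w, hrec Y hY]; omega
    have h3 := sum_card_powerset X
    have h4 := shearer_arith M Δ X.card hΔ
    have : M * (2 ^ X.card + 1) = M * (1 + 2 ^ X.card) := by ring
    omega
  have hIne : I.Nonempty := ⟨∅, by simp [hI]⟩
  have htot : ∑ W ∈ I, M * A.card ≤ ∑ W ∈ I, 2 * Δ * W.card := by
    calc ∑ W ∈ I, M * A.card = ∑ v ∈ A, M * I.card := by simp; ring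
      _ ≤ ∑ v ∈ A, ∑ W ∈ I, w v W := Finset.sum_le_sum key
      _ = ∑ W ∈ I, ∑ v ∈ A, w v W := Finset.sum_comm
      _ ≤ _ := by
        refine Finset.sum_le_sum fun W hW => ?_
        simp only [hI, Finset.mem_filter, Finset.mem_powerset] at hW
        have e1 : ∑ v ∈ A, (if v ∈ W then Δ else 0) = W.card * Δ := by
          rw [← Finset.sum_filter, Finset.sum_const, smul_eq_mul,
            Finset.filter_mem_eq_inter, Finset.inter_eq_right.2 hW.1]
        have e2 : ∑ v ∈ A, (W.filter (G.Adj v)).card = ∑ u ∈ W, (A.filter (fun v => G.Adj v u)).card :=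
          Finset.sum_card_bipartiteAbove_eq_sum_card_bipartiteBelow _
        have e3 : ∑ u ∈ W, (A.filter (fun v => G.Adj v u)).card ≤ W.card * Δ := by
          rw [← smul_eq_mul]
          refine Finset.sum_le_card_nsmul _ _ _ fun u hu => ?_
          simpa only [G.adj_comm] using hA u (hW.1 hu)
        simp only [w, Finset.sum_add_distrib, e1, e2]
        nlinarith
  obtain ⟨W, hW, hle⟩ := Finset.exists_le_of_sum_le hIne htot
  simp only [hI, Finset.mem_filter, Finset.mem_powerset] at hW
  exact ⟨W, hW.1, hW.2, hle⟩

/-! ### Cycles of length divisible by `k` -/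

open Classical in
/-- Greedy construction of a path of prescribed length `m` avoiding a small set `X`. -/
lemma exists_path_avoiding {F : SimpleGraph V} {H : Finset V} {q : ℕ}
    (hH : ∀ v ∈ H, q < (H.filter (F.Adj v)).card) :
    ∀ (m : ℕ) (X : Finset V) (z : V), z ∈ H → z ∉ X → X.card + m ≤ q →
      ∃ e, ∃ p : F.Walk z e, p.IsPath ∧ p.length = m ∧ ∀ y ∈ p.support, y ∈ H ∧ y ∉ X := by
  intro m
  induction m with
  | zero =>
    intro X z hz hzX _
    exact ⟨z, Walk.nil, by simp, rfl, by simp [hz, hzX]⟩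
  | succ m ih =>
    intro X z hz hzX hc
    obtain ⟨z', hz', hn⟩ : ∃ z' ∈ H.filter (F.Adj z), z' ∉ insert z X := by
      apply Finset.exists_mem_notMem_of_card_lt_card
      have := hH z hz
      have := Finset.card_insert_le z X
      omega
    rw [Finset.mem_filter] at hz'
    obtain ⟨e, p, hp, hl, hs⟩ := ih (insert z X) z' hz'.1 hn
      (by have := Finset.card_insert_le z X; omega)
    refine ⟨e, Walk.cons hz'.2 p, ?_, by simp [hl], ?_⟩
    · rw [Walk.cons_isPath_iff]
      exact ⟨hp, fun h => (hs z h).2 (by simp)⟩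
    · intro y hy
      rw [Walk.support_cons, List.mem_cons] at hy
      rcases hy with rfl | hy
      · exact ⟨hz, hzX⟩
      · exact ⟨(hs y hy).1, fun h => (hs y hy).2 (by simp [h])⟩

open Classical in
/-- If two neighbours `u`, `u'` of `w` get different values of `c`, then from one of them there is a
path of length `m + 2` whose ends get different values: grow a path from `w` and start at whichever
of `u`, `u'` disagrees with its far end. -/
lemma exists_bicolored_path {F : SimpleGraph V} {H : Finset V} {q m : ℕ}
    (hH : ∀ v ∈ H, q < (H.filter (F.Adj v)).card) (hq : m + 3 ≤ q) {α : Type*} (c : V → α)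
    {w u u' : V} (hw : w ∈ H) (hu : u ∈ H) (hu' : u' ∈ H) (hwu : F.Adj w u) (hwu' : F.Adj w u')
    (hc : c u ≠ c u') :
    ∃ a b, ∃ p : F.Walk a b, (a = u ∨ a = u') ∧ p.IsPath ∧ p.length = m + 2 ∧
      (∀ y ∈ p.support, y ∈ H) ∧ c a ≠ c b := by
  have h3 : ({w, u, u'} : Finset V).card ≤ 3 := Finset.card_le_three
  obtain ⟨z, hz, hn⟩ : ∃ z ∈ H.filter (F.Adj w), z ∉ ({w, u, u'} : Finset V) := by
    apply Finset.exists_mem_notMem_of_card_lt_card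
    have := hH w hw
    omega
  rw [Finset.mem_filter] at hz
  obtain ⟨e, p, hp, hl, hs⟩ := exists_path_avoiding hH m {w, u, u'} z hz.1 hn (by omega)
  have main : ∀ a ∈ ({u, u'} : Finset V), a ∈ H → F.Adj w a → c a ≠ c e →
      ∃ p : F.Walk a e, p.IsPath ∧ p.length = m + 2 ∧ (∀ y ∈ p.support, y ∈ H) := by
    intro a ha haH hwa _
    refine ⟨Walk.cons hwa.symm (Walk.cons hz.2 p), ?_, by simp [hl], ?_⟩
    · rw [Walk.cons_isPath_iff, Walk.cons_isPath_iff]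
      refine ⟨⟨hp, fun h => (hs w h).2 (by simp)⟩, ?_⟩
      rw [Walk.support_cons, List.mem_cons, not_or]
      refine ⟨hwa.ne', fun h => (hs a h).2 ?_⟩
      simp only [Finset.mem_insert, Finset.mem_singleton] at ha ⊢
      tauto
    · intro y hy
      simp only [Walk.support_cons, List.mem_cons] at hy
      rcases hy with rfl | rfl | hy
      · exact haH
      · exact hw
      · exact (hs y hy).1
  by_cases hce : c u = c e
  · have hce' : c u' ≠ c e := fun h => hc (hce.trans h.symm)
    obtain ⟨p, hp⟩ := main u' (by simp) hu' hwu' hce'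
    exact ⟨u', e, p, Or.inr rfl, hp.1, hp.2.1, hp.2.2, hce'⟩
  · obtain ⟨p, hp⟩ := main u (by simp) hu hwu hce
    exact ⟨u, e, p, Or.inl rfl, hp.1, hp.2.1, hp.2.2, hce⟩

open Classical in
/-- Cycle of length divisible by `k` from two consecutive levels of a breadth-first tree with parent
map `par`. `H` is a minimal set of large minimum degree in the levels `i` and `i + 1`. Let `t` be
the least height at which all level-`i` vertices of `H` share an ancestor, so that the map
`c = par^[t - 1]` is not constant there. Minimality of `H` makes it connected, so some vertex of
level `i + 1` has two neighbours with distinct values of `c`. Hence for every `j ≤ k` there is a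
path of length `2 * j` in `H` whose ends have ancestors meeting exactly at height `t`, which closes
to a cycle of length `2 * j + 2 * t`; `j` is chosen with `k ∣ t + j`. -/
lemma exists_cycle_of_levels {F : SimpleGraph V} {lev : V → ℕ} {par : V → V} {r : V} {i k : ℕ}
    (hk : 0 < k) {H : Finset V} (hne : H.Nonempty)
    (hH : ∀ v ∈ H, 2 * k + 5 < (H.filter (F.Adj v)).card)
    (hmin : ∀ H' ⊆ H, H'.Nonempty → (∀ v ∈ H', 2 * k + 5 < (H'.filter (F.Adj v)).card) → H' = H)
    (hlev : ∀ v ∈ H, lev v = i ∨ lev v = i + 1)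
    (hadj : ∀ u ∈ H, ∀ v ∈ H, F.Adj u v → lev u ≠ lev v)
    (hpar : ∀ v ∈ H, lev v = i → ∀ s ≤ i, lev (par^[s] v) = i - s ∧
      (s < i → F.Adj (par^[s] v) (par^[s + 1] v)))
    (hroot : ∀ v ∈ H, lev v = i → par^[i] v = r) :
    ∃ L, 3 ≤ L ∧ k ∣ L ∧ ∃ g : ℕ → V, Set.InjOn g (Set.Iio L) ∧
      (∀ x, x + 1 < L → F.Adj (g x) (g (x + 1))) ∧ F.Adj (g (L - 1)) (g 0) := by
  have hnb : ∀ v ∈ H, ∀ l, (lev v = i ∧ l = i + 1 ∨ lev v = i + 1 ∧ l = i) →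
      ∀ u ∈ H, F.Adj v u → lev u = l := by
    intro v hv l hl u hu hvu
    have := hadj v hv u hu hvu
    have := hlev u hu
    omega
  let P : ℕ → Prop := fun t => ∀ u ∈ H, ∀ v ∈ H, lev u = i → lev v = i → par^[t] u = par^[t] v
  have hPi : P i := by
    intro u hu v hv hlu hlv
    rw [hroot u hu hlu, hroot v hv hlv]
  have hP0 : ¬ P 0 := by
    intro h0
    obtain ⟨w, hw, hwl⟩ : ∃ w ∈ H, lev w = i + 1 := by
      obtain ⟨v, hv⟩ := hne
      rcases hlev v hv with h | h
      · obtain ⟨u, hu⟩ : (H.filter (F.Adj v)).Nonempty := by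
          rw [← Finset.card_pos]; have := hH v hv; omega
        rw [Finset.mem_filter] at hu
        exact ⟨u, hu.1, hnb v hv (i + 1) (Or.inl ⟨h, rfl⟩) u hu.1 hu.2⟩
      · exact ⟨v, hv, h⟩
    obtain ⟨a, ha, b, hb, hab⟩ : ∃ a ∈ H.filter (F.Adj w), ∃ b ∈ H.filter (F.Adj w), a ≠ b :=
      Finset.one_lt_card.1 (by have := hH w hw; omega)
    rw [Finset.mem_filter] at ha hb
    exact hab (h0 a ha.1 b hb.1 (hnb w hw i (Or.inr ⟨hwl, rfl⟩) a ha.1 ha.2)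
      (hnb w hw i (Or.inr ⟨hwl, rfl⟩) b hb.1 hb.2))
  obtain ⟨t, ht0, hti, hPt, hPt'⟩ : ∃ t, 0 < t ∧ t ≤ i ∧ P t ∧ ¬ P (t - 1) := by
    have hex : ∃ t, P t := ⟨i, hPi⟩
    have h0 : 0 < Nat.find hex := by
      rw [Nat.find_pos]; exact hP0
    exact ⟨Nat.find hex, h0, Nat.find_min' hex hPi, Nat.find_spec hex,
      Nat.find_min hex (by omega)⟩
  set c : V → V := par^[t - 1] with hcdef
  obtain ⟨w, hw, hwl, u, hu, hwu, u', hu', hwu', hcu⟩ : ∃ w ∈ H, lev w = i + 1 ∧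
      ∃ u ∈ H, F.Adj w u ∧ ∃ u' ∈ H, F.Adj w u' ∧ c u ≠ c u' := by
    by_contra! hcon
    apply hPt'
    intro u0 hu0 v0 hv0 hlu0 hlv0
    by_contra hne0
    -- `H'` is closed under adjacency in `H`, so minimality gives `H' = H`, although `v0 ∉ H'`.
    let H' := H.filter (fun x => (lev x = i ∧ c x = c u0) ∨
      (lev x = i + 1 ∧ ∃ y ∈ H, F.Adj x y ∧ c y = c u0))
    have hclosed : ∀ v ∈ H', ∀ x ∈ H, F.Adj v x → x ∈ H' := by
      intro v hv x hx hvx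
      simp only [H', Finset.mem_filter] at hv ⊢
      refine ⟨hx, ?_⟩
      obtain ⟨hvH, ⟨hl, hcv⟩ | ⟨hl, y, hy, hvy, hcy⟩⟩ := hv
      · exact Or.inr ⟨hnb v hvH _ (Or.inl ⟨hl, rfl⟩) x hx hvx, v, hvH, hvx.symm, hcv⟩
      · refine Or.inl ⟨hnb v hvH _ (Or.inr ⟨hl, rfl⟩) x hx hvx, ?_⟩
        rw [← hcy]
        exact hcon v hvH hl x hx hvx y hy hvy
    have hH' : H' = H := by
      apply hmin H' (Finset.filter_subset _ _)
      · exact ⟨u0, by simp [H', hu0, hlu0]⟩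
      · intro v hv
        refine (hH v (Finset.filter_subset _ _ hv)).trans_le (Finset.card_le_card ?_)
        intro x hx
        rw [Finset.mem_filter] at hx ⊢
        exact ⟨hclosed v hv x hx.1 hx.2, hx.2⟩
    have : v0 ∈ H' := by rw [hH']; exact hv0
    simp only [H', Finset.mem_filter] at this
    rcases this.2 with h | h
    · exact hne0 h.2.symm
    · omega
  obtain ⟨j, hj0, hjk, hj⟩ : ∃ j, 0 < j ∧ j ≤ k ∧ k ∣ t + j := by
    refine ⟨k - t % k, ?_, by omega, ?_⟩
    · have := Nat.mod_lt t hk; omega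
    · have h1 := Nat.mod_lt t hk
      have h2 := Nat.div_add_mod t k
      refine ⟨t / k + 1, ?_⟩
      rw [mul_add, mul_one]
      omega
  obtain ⟨a, b, p, ha, hp, hpl, hps, hcab⟩ := exists_bicolored_path (m := 2 * j - 2) hH (by omega) c
    hw hu hu' hwu hwu' hcu
  have hpl : p.length = 2 * j := by omega
  have hla : lev a = i := by
    rcases ha with rfl | rfl
    · exact hnb w hw i (Or.inr ⟨hwl, rfl⟩) _ hu hwu
    · exact hnb w hw i (Or.inr ⟨hwl, rfl⟩) _ hu' hwu'
  have hpH : ∀ x, p.getVert x ∈ H := fun x => hps _ (p.getVert_mem_support x)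
  have hpar2 : ∀ x ≤ 2 * j, lev (p.getVert x) % 2 = (i + x) % 2 := by
    intro x
    induction x with
    | zero => intro _; simp [hla]
    | succ x ih =>
      intro hx
      have h1 := ih (by omega)
      have h2 := hadj _ (hpH x) _ (hpH (x + 1)) (p.adj_getVert_succ (by omega))
      have h3 := hlev _ (hpH x)
      have h4 := hlev _ (hpH (x + 1))
      omega
  have hbv : p.getVert (2 * j) = b := by rw [← hpl]; exact p.getVert_length
  have hav : p.getVert 0 = a := p.getVert_zero
  have haH : a ∈ H := hav ▸ hpH 0
  have hbH : b ∈ H := hbv ▸ hpH (2 * j)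
  have hlb : lev b = i := by
    have h1 := hpar2 (2 * j) le_rfl
    rw [hbv] at h1
    have := hlev b hbH
    omega
  have hpa := hpar a haH hla
  have hpb := hpar b hbH hlb
  have hpt : par^[t] b = par^[t] a := hPt b hbH a haH hlb hla
  have hne' : ∀ s ≤ t - 1, par^[s] a ≠ par^[s] b := by
    intro s hs e
    apply hcab
    have : t - 1 = (t - 1 - s) + s := by omega
    rw [hcdef, this, Function.iterate_add_apply, Function.iterate_add_apply, e]
  -- Along `p` from `a` to `b`, up the ancestors of `b` to the common one, and down to `a`.
  let g : ℕ → V := fun x => if x ≤ 2 * j then p.getVert x else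
    if x ≤ 2 * j + t then par^[x - 2 * j] b else par^[2 * j + 2 * t - x] a
  have g1 : ∀ x ≤ 2 * j, g x = p.getVert x := fun x hx => by simp [g, hx]
  have g2 : ∀ x, 2 * j ≤ x → x ≤ 2 * j + t → g x = par^[x - 2 * j] b := by
    intro x hx hx'
    rcases hx.eq_or_lt with rfl | h
    · simp [g, hbv]
    · simp [g, hx', not_le.2 h]
  have g3 : ∀ x, 2 * j + t ≤ x → g x = par^[2 * j + 2 * t - x] a := by
    intro x hx
    rcases hx.eq_or_lt with rfl | h
    · rw [g2 _ (by omega) le_rfl, show 2 * j + t - 2 * j = t by omega,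
        show 2 * j + 2 * t - (2 * j + t) = t by omega, hpt]
    · have h' : ¬ x ≤ 2 * j := by omega
      simp [g, not_le.2 h, h']
  have l1 : ∀ x ≤ 2 * j, i ≤ lev (g x) := by
    intro x hx
    rw [g1 x hx]
    have := hlev _ (hpH x)
    omega
  have l2 : ∀ x, 2 * j ≤ x → x ≤ 2 * j + t → lev (g x) = i - (x - 2 * j) := by
    intro x hx hx'
    rw [g2 x hx hx']
    exact (hpb _ (by omega)).1
  have l3 : ∀ x, 2 * j + t ≤ x → x < 2 * j + 2 * t → lev (g x) = i - (2 * j + 2 * t - x) := by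
    intro x hx hx'
    rw [g3 x hx]
    exact (hpa _ (by omega)).1
  have hinj : ∀ x y, x < y → y < 2 * j + 2 * t → g x ≠ g y := by
    intro x y hxy hy e
    have el : lev (g x) = lev (g y) := by rw [e]
    rcases le_or_gt y (2 * j) with hy1 | hy1
    · rw [g1 x (by omega), g1 y hy1] at e
      have := hp.getVert_injOn (by simp; omega) (by simp; omega) e
      omega
    rcases le_or_gt y (2 * j + t) with hy2 | hy2
    · rw [l2 y hy1.le hy2] at el
      rcases le_or_gt x (2 * j) with hx1 | hx1
      · have := l1 x hx1
        omega
      · rw [l2 x hx1.le (by omega)] at el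
        omega
    · rw [l3 y hy2.le hy] at el
      rcases le_or_gt x (2 * j) with hx1 | hx1
      · have := l1 x hx1
        omega
      rcases le_or_gt x (2 * j + t) with hx2 | hx2
      · rw [l2 x hx1.le hx2] at el
        rw [g2 x hx1.le hx2, g3 y hy2.le, show x - 2 * j = 2 * j + 2 * t - y by omega] at e
        exact hne' _ (by omega) e.symm
      · rw [l3 x hx2.le (by omega)] at el
        omega
  refine ⟨2 * j + 2 * t, by omega, ?_, g, ?_, ?_, ?_⟩
  · rw [show 2 * j + 2 * t = (t + j) * 2 by ring]
    exact Dvd.dvd.mul_right hj 2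
  · intro x hx y hy e
    simp only [Set.mem_Iio] at hx hy
    rcases lt_trichotomy x y with h | h | h
    · exact absurd e (hinj x y h hy)
    · exact h
    · exact absurd e.symm (hinj y x h hx)
  · intro x hx
    rcases lt_or_ge x (2 * j) with h1 | h1
    · rw [g1 x h1.le, g1 (x + 1) h1]
      exact p.adj_getVert_succ (by omega)
    rcases lt_or_ge x (2 * j + t) with h2 | h2
    · rw [g2 x h1 h2.le, g2 (x + 1) (by omega) h2, show x + 1 - 2 * j = x - 2 * j + 1 by omega]
      exact (hpb _ (by omega)).2 (by omega)
    · rw [g3 x h2, g3 (x + 1) (by omega),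
        show 2 * j + 2 * t - x = 2 * j + 2 * t - (x + 1) + 1 by omega]
      exact ((hpa _ (by omega)).2 (by omega)).symm
  · rw [g3 _ (by omega), g1 0 (by omega), hav,
      show 2 * j + 2 * t - (2 * j + 2 * t - 1) = 1 by omega]
    exact ((hpa 0 (by omega)).2 (by omega)).symm

open Classical in
/-- Breadth-first levels of a component of a bipartite graph of large minimum degree: if all
consecutive pairs of levels were degenerate, orienting each of them would give an orientation of the
component of too small out-degree. Here `σ` is the bipartition. -/
lemma exists_cycle_of_reachable_degree [Fintype V] {F : SimpleGraph V} {k : ℕ} (hk : 0 < k)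
    (σ : V → Bool) (hσ : ∀ x y, F.Adj x y → σ x ≠ σ y) (r : V)
    (hdeg : ∀ v, F.Reachable r v → 4 * (2 * k + 5) < (Finset.univ.filter (F.Adj v)).card) :
    ∃ L, 3 ≤ L ∧ k ∣ L ∧ ∃ g : ℕ → V, Set.InjOn g (Set.Iio L) ∧
      (∀ x, x + 1 < L → F.Adj (g x) (g (x + 1))) ∧ F.Adj (g (L - 1)) (g 0) := by
  set q := 2 * k + 5 with hq
  have hbool : ∀ a b c : Bool, a ≠ b → (¬ b = c ↔ a = c) := by decide
  have hbool' : ∀ a b c : Bool, a ≠ b → ¬ (c = a ↔ c = b) := by decide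
  have hwalk : ∀ u v (p : F.Walk u v), Even p.length ↔ σ u = σ v := by
    intro u v p
    induction p with
    | nil => simp
    | cons h p ih =>
      rw [Walk.length_cons, Nat.even_add_one, ih]
      exact hbool _ _ _ (hσ _ _ h)
  set lev : V → ℕ := F.dist r with hlevdef
  have hpar : ∀ v, F.Reachable r v → (Even (lev v) ↔ σ r = σ v) := by
    intro v hv
    obtain ⟨p, hp⟩ := hv.exists_walk_length_eq_dist
    rw [hlevdef, ← hp]
    exact hwalk _ _ p
  have hadj : ∀ u v, F.Reachable r u → F.Adj u v → lev v = lev u + 1 ∨ lev u = lev v + 1 := by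
    intro u v hu huv
    have h1 := hpar u hu
    have h2 := hpar v (hu.trans huv.reachable)
    have h3 := hσ u v huv
    have h4 : lev v ≠ lev u := by
      intro e
      rw [e, h1] at h2
      exact hbool' _ _ _ h3 h2
    have h5 := huv.diff_dist_adj (u := r)
    change lev v = lev u ∨ lev v = lev u + 1 ∨ lev v = lev u - 1 at h5
    omega
  have hpx : ∀ v, ∃ y, F.Reachable r v → 0 < lev v → F.Adj v y ∧ F.Reachable r y ∧
      lev v = lev y + 1 := by
    intro v
    by_cases hv : F.Reachable r v ∧ 0 < lev v
    · obtain ⟨p, hp⟩ := hv.1.exists_walk_length_eq_dist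
      have hpos : 0 < p.length := by rw [hp]; exact hv.2
      refine ⟨p.getVert (p.length - 1), fun _ _ => ?_⟩
      have h1 : F.Adj (p.getVert (p.length - 1)) v := by
        have := p.adj_getVert_succ (i := p.length - 1) (by omega)
        rwa [show p.length - 1 + 1 = p.length by omega, p.getVert_length] at this
      have h2 : F.Reachable r (p.getVert (p.length - 1)) := ⟨p.take _⟩
      refine ⟨h1.symm, h2, ?_⟩
      have h3 : lev (p.getVert (p.length - 1)) ≤ p.length - 1 :=
        (dist_le (p.take (p.length - 1))).trans (by rw [Walk.take_length]; omega)
      have h4 : p.length = lev v := hp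
      have := hadj _ _ h2 h1
      omega
    · exact ⟨v, fun h h' => absurd ⟨h, h'⟩ hv⟩
  choose par hparspec using hpx
  let Lv : ℕ → Finset V := fun i => Finset.univ.filter (fun v => F.Reachable r v ∧ lev v = i)
  have hLv : ∀ i v, v ∈ Lv i ↔ F.Reachable r v ∧ lev v = i := by simp [Lv]
  obtain ⟨i, hi⟩ : ∃ i, ¬ Degen F (Lv i ∪ Lv (i + 1)) q := by
    by_contra! hcon
    choose out ho hadj' using fun i => (hcon i).orient
    let R : Finset V := Finset.univ.filter (F.Reachable r)
    have hR : ∀ v, v ∈ R ↔ F.Reachable r v := by simp [R]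
    have hsum := sum_degree_le_of_orient (G := F) (q := 2 * q) R
      (fun v => out (lev v) v ∪ out (lev v - 1) v) ?_ ?_
    · have h1 : R.card • (4 * q + 1) ≤ ∑ v ∈ R, (R.filter (F.Adj v)).card := by
        refine Finset.card_nsmul_le_sum _ _ _ fun v hv => ?_
        rw [hR] at hv
        refine (hdeg v hv).trans_le (Finset.card_le_card fun x hx => ?_)
        simp only [Finset.mem_filter, Finset.mem_univ, true_and] at hx
        simp [hR, hx, hv.trans hx.reachable]
      have h2 : 0 < R.card := Finset.card_pos.2 ⟨r, by simp [hR]⟩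
      rw [smul_eq_mul] at h1
      nlinarith
    · intro v hv
      rw [hR] at hv
      have h1 := ho (lev v) v (by simp [hLv, hv])
      have h2 := ho (lev v - 1) v (by simp [hLv, hv]; omega)
      have := Finset.card_union_le (out (lev v) v) (out (lev v - 1) v)
      omega
    · have half : ∀ u v, F.Reachable r u → F.Reachable r v → F.Adj u v → lev v = lev u + 1 →
          v ∈ out (lev u) u ∨ u ∈ out (lev v - 1) v := by
        intro u v hu hv huv hl
        rw [hl, Nat.add_sub_cancel]
        exact hadj' (lev u) u (by simp [hLv, hu]) v (by simp [hLv, hv, hl]) huv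
      intro u hu v hv huv
      rw [hR] at hu hv
      simp only [Finset.mem_union]
      rcases hadj u v hu huv with h | h
      · have := half u v hu hv huv h
        tauto
      · have := half v u hv hu huv.symm h
        tauto
  unfold Degen at hi
  push Not at hi
  obtain ⟨T, hT, hTne, hTdeg⟩ := hi
  obtain ⟨H, hHmem, hHmin⟩ := Finset.exists_min_image
    (T.powerset.filter (fun H => H.Nonempty ∧ ∀ v ∈ H, q < (H.filter (F.Adj v)).card))
    Finset.card ⟨T, by simp only [Finset.mem_filter, Finset.mem_powerset]; exact ⟨subset_rfl, hTne, hTdeg⟩⟩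
  simp only [Finset.mem_filter, Finset.mem_powerset] at hHmem hHmin
  have hHR : ∀ v ∈ H, F.Reachable r v ∧ (lev v = i ∨ lev v = i + 1) := by
    intro v hv
    have := hT (hHmem.1 hv)
    rw [Finset.mem_union, hLv, hLv] at this
    tauto
  have hit : ∀ v ∈ H, lev v = i → ∀ s ≤ i,
      F.Reachable r (par^[s] v) ∧ lev (par^[s] v) = i - s := by
    intro v hv hl s
    induction s with
    | zero => intro _; exact ⟨(hHR v hv).1, hl⟩
    | succ s ih =>
      intro hs
      obtain ⟨h1, h2⟩ := ih (by omega)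
      rw [Function.iterate_succ_apply']
      have := hparspec _ h1 (by omega)
      exact ⟨this.2.1, by omega⟩
  refine exists_cycle_of_levels (lev := lev) (par := par) (r := r) (i := i) hk hHmem.2.1
    hHmem.2.2 ?_ (fun v hv => (hHR v hv).2) ?_ ?_ ?_
  · intro H' hs hne hd
    exact Finset.eq_of_subset_of_card_le hs (hHmin H' ⟨hs.trans hHmem.1, hne, hd⟩)
  · intro u hu v hv huv
    have := hadj u v (hHR u hu).1 huv
    omega
  · intro v hv hl s hs
    refine ⟨(hit v hv hl s hs).2, fun hlt => ?_⟩
    rw [Function.iterate_succ_apply']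
    exact (hparspec _ (hit v hv hl s hs).1 (by rw [(hit v hv hl s hs).2]; omega)).1
  · intro v hv hl
    obtain ⟨h1, h2⟩ := hit v hv hl i le_rfl
    rw [Nat.sub_self] at h2
    exact ((h1.dist_eq_zero_iff).1 h2).symm

open Classical in
/-- A bipartite graph of large minimum degree on a nonempty set `S` contains a cycle (not necessarily
induced) of length divisible by `k`, presented as a map `g` on `0, …, L - 1`. -/
lemma exists_cycle_of_degree [Fintype V] {F : SimpleGraph V} {k : ℕ} (hk : 0 < k)
    (σ : V → Bool) (hσ : ∀ x y, F.Adj x y → σ x ≠ σ y) (S : Finset V) (hS : S.Nonempty)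
    (hdeg : ∀ v ∈ S, 4 * (2 * k + 5) < (S.filter (F.Adj v)).card) :
    ∃ L, 3 ≤ L ∧ k ∣ L ∧ ∃ g : ℕ → V, Set.InjOn g (Set.Iio L) ∧
      (∀ x, x + 1 < L → F.Adj (g x) (g (x + 1))) ∧ F.Adj (g (L - 1)) (g 0) := by
  obtain ⟨r, hr⟩ := hS
  let F' : SimpleGraph V :=
    { Adj := fun x y => F.Adj x y ∧ x ∈ S ∧ y ∈ S
      symm := ⟨fun x y h => ⟨h.1.symm, h.2.2, h.2.1⟩⟩
      loopless := ⟨fun x h => F.loopless.irrefl x h.1⟩ }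
  have hreach : ∀ v, F'.Reachable r v → v ∈ S := by
    rintro v ⟨p⟩
    induction p with
    | nil => exact hr
    | cons h p ih => exact ih h.2.2
  obtain ⟨L, h3, hL, g, hg, hg1, hg2⟩ := exists_cycle_of_reachable_degree (F := F') hk σ
    (fun x y h => hσ x y h.1) r (by
      intro v hv
      have hvS := hreach v hv
      refine (hdeg v hvS).trans_le (Finset.card_le_card fun x hx => ?_)
      rw [Finset.mem_filter] at hx
      simp [F', hx.1, hx.2, hvS])
  exact ⟨L, h3, hL, g, hg, fun x hx => (hg1 x hx).1, hg2.1⟩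

/-! ### Induced cycles -/

lemma cycleGraph_adj_iff_mod {n : ℕ} (hn : 2 ≤ n) (i j : Fin n) :
    (cycleGraph n).Adj i j ↔ (i.val + 1) % n = j.val ∨ (j.val + 1) % n = i.val := by
  have key : ∀ u v : Fin n, (u - v).val = 1 ↔ (v.val + 1) % n = u.val := by
    intro u v
    have hu := u.isLt
    have hv := v.isLt
    rw [Fin.sub_def]
    simp only
    have h1 : (n - v.val + u.val) % n =
        if v.val ≤ u.val then u.val - v.val else n - v.val + u.val := by
      split_ifs with h
      · rw [show n - v.val + u.val = (u.val - v.val) + n by omega, Nat.add_mod_right,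
          Nat.mod_eq_of_lt (by omega)]
      · exact Nat.mod_eq_of_lt (by omega)
    have h2 : (v.val + 1) % n = if v.val + 1 = n then 0 else v.val + 1 := by
      split_ifs with h
      · rw [h, Nat.mod_self]
      · exact Nat.mod_eq_of_lt (by omega)
    rw [h1, h2]
    split_ifs <;> omega
  rw [cycleGraph_adj', key, key]
  tauto

/-- Vertices `g x` and `a x` for `x < L`, with `a x` adjacent exactly to `g x` and its cyclic
successor and with no other adjacency, form an induced cycle of length `2 * L`: even positions are
occupied by `g`, odd ones by `a`. -/
lemma exists_embedding_of_subdivision {G : SimpleGraph V} {L : ℕ} (hL : 3 ≤ L) (g a : ℕ → V)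
    (hg : Set.InjOn g (Set.Iio L))
    (hgg : ∀ x < L, ∀ y < L, ¬ G.Adj (g x) (g y))
    (haa : ∀ x < L, ∀ y < L, ¬ G.Adj (a x) (a y))
    (hag : ∀ x < L, ∀ y < L, G.Adj (a x) (g y) ↔ y = x ∨ y = (x + 1) % L) :
    Nonempty (cycleGraph (2 * L) ↪g G) := by
  have hmod : ∀ x < L, (x + 1) % L = if x + 1 = L then 0 else x + 1 := by
    intro x hx
    split_ifs with h
    · rw [h, Nat.mod_self]
    · exact Nat.mod_eq_of_lt (by omega)
  have hmod2 : ∀ x < 2 * L, (x + 1) % (2 * L) = if x + 1 = 2 * L then 0 else x + 1 := by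
    intro x hx
    split_ifs with h
    · rw [h, Nat.mod_self]
    · exact Nat.mod_eq_of_lt (by omega)
  have hne : ∀ x < L, ∀ y < L, a x ≠ g y := by
    intro x hx y hy e
    have := (hag x hx x hx).2 (Or.inl rfl)
    rw [e] at this
    exact hgg y hy x hx this
  have hainj : ∀ x < L, ∀ y < L, a x = a y → x = y := by
    intro x hx y hy e
    have h1 := (hag x hx y hy).1 (by rw [e]; exact (hag y hy y hy).2 (Or.inl rfl))
    have hlt : (y + 1) % L < L := Nat.mod_lt _ (by omega)
    have h2 := (hag x hx _ hlt).1 (by rw [e]; exact (hag y hy _ hlt).2 (Or.inr rfl))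
    have ex := hmod x hx
    have ey := hmod y hy
    generalize (x + 1) % L = x' at *
    generalize (y + 1) % L = y' at *
    split_ifs at ex ey <;> omega
  let h : ℕ → V := fun i => if i % 2 = 0 then g (i / 2) else a (i / 2)
  have he : ∀ i, i % 2 = 0 → h i = g (i / 2) := fun i hi => by simp [h, hi]
  have ho : ∀ i, i % 2 = 1 → h i = a (i / 2) := fun i hi => by simp [h, hi]
  refine ⟨⟨⟨fun i => h i.val, ?_⟩, ?_⟩⟩
  · intro i j hij
    have hi := i.isLt
    have hj := j.isLt
    simp only at hij
    apply Fin.ext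
    rcases Nat.mod_two_eq_zero_or_one i.val with h1 | h1 <;>
      rcases Nat.mod_two_eq_zero_or_one j.val with h2 | h2
    · rw [he _ h1, he _ h2] at hij
      have := hg (by simp; omega) (by simp; omega) hij
      omega
    · rw [he _ h1, ho _ h2] at hij
      exact absurd hij.symm (hne _ (by omega) _ (by omega))
    · rw [ho _ h1, he _ h2] at hij
      exact absurd hij (hne _ (by omega) _ (by omega))
    · rw [ho _ h1, ho _ h2] at hij
      have := hainj _ (by omega) _ (by omega) hij
      omega
  · intro i j
    have hi := i.isLt
    have hj := j.isLt
    change G.Adj (h i.val) (h j.val) ↔ _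
    rw [cycleGraph_adj_iff_mod (by omega), hmod2 _ hi, hmod2 _ hj]
    rcases Nat.mod_two_eq_zero_or_one i.val with h1 | h1 <;>
      rcases Nat.mod_two_eq_zero_or_one j.val with h2 | h2
    · rw [he _ h1, he _ h2]
      refine iff_of_false (hgg _ (by omega) _ (by omega)) ?_
      split_ifs <;> omega
    · rw [he _ h1, ho _ h2, G.adj_comm, hag _ (by omega) _ (by omega), hmod _ (by omega)]
      split_ifs <;> omega
    · rw [ho _ h1, he _ h2, hag _ (by omega) _ (by omega), hmod _ (by omega)]
      split_ifs <;> omega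
    · rw [ho _ h1, ho _ h2]
      refine iff_of_false (haa _ (by omega) _ (by omega)) ?_
      split_ifs <;> omega

lemma no_four_cycle {G : SimpleGraph V} (htri : ∀ a b c, G.Adj a b → G.Adj a c → ¬ G.Adj b c)
    (h4 : IsEmpty (cycleGraph 4 ↪g G)) {a a' b b' : V} (ha : a ≠ a') (hb : b ≠ b')
    (h1 : G.Adj a b) (h2 : G.Adj a b') (h3 : G.Adj a' b) (h5 : G.Adj a' b') : False := by
  have hbb := htri a b b' h1 h2
  have haa := htri b a a' h1.symm h3.symm
  have hbb' : ¬ G.Adj b' b := fun h => hbb h.symm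
  have haa' : ¬ G.Adj a' a := fun h => haa h.symm
  refine h4.elim ⟨⟨![a, b, a', b'], ?_⟩, ?_⟩
  · intro i j hij
    fin_cases i <;> fin_cases j <;>
      simp [ha, hb, ha.symm, hb.symm, h1.ne, h2.ne, h3.ne, h5.ne, h1.ne', h2.ne', h3.ne',
        h5.ne'] at hij ⊢
  · intro i j
    change G.Adj (![a, b, a', b'] i) (![a, b, a', b'] j) ↔ _
    rw [cycleGraph_adj_iff_mod (by norm_num)]
    fin_cases i <;> fin_cases j <;>
      simp [h1, h2, h3, h5, h1.symm, h2.symm, h3.symm, h5.symm, haa, hbb, haa', hbb']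

/-! ### Random colourings -/

lemma card_filter_val_ge_two (m : ℕ) :
    m ≤ (Finset.univ.filter (fun x : Fin m => 2 ≤ x.val)).card + 2 := by
  have h := Finset.card_filter_add_card_filter_not (s := (Finset.univ : Finset (Fin m)))
    (fun x => 2 ≤ x.val)
  have h2 : (Finset.univ.filter (fun x : Fin m => ¬ 2 ≤ x.val)).card ≤ (Finset.range 2).card := by
    refine Finset.card_le_card_of_injOn (fun x => x.val) ?_ ?_
    · intro x hx; simpa using hx
    · intro x _ y _ e; exact Fin.ext e
  simp at h h2 ⊢
  omega

lemma card_filter_val_lt_two (m : ℕ) :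
    (Finset.univ.filter (fun x : Fin m => x.val < 2)).card ≤ 2 := by
  have h2 : (Finset.univ.filter (fun x : Fin m => x.val < 2)).card ≤ (Finset.range 2).card := by
    refine Finset.card_le_card_of_injOn (fun x => x.val) ?_ ?_
    · intro x hx; simpa using hx
    · intro x _ y _ e; exact Fin.ext e
  simpa using h2

open Classical in
/-- Independence of the values of a uniformly random colouring, in counting form. -/
lemma card_filter_pi [Fintype V] {m : ℕ} (p : V → Fin m → Prop)
    [∀ v, DecidablePred (p v)] [DecidablePred fun c : V → Fin m => ∀ v, p v (c v)] :
    (Finset.univ.filter (fun c : V → Fin m => ∀ v, p v (c v))).card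
      = ∏ v, (Finset.univ.filter (p v)).card := by
  rw [← Fintype.card_piFinset]
  congr 1
  ext c
  simp [Fintype.mem_piFinset]

open Classical in
/-- In a random colouring with `m` colours, the event that `b₁` gets colour `0`, `b₂` gets colour `1`
and all of `T` avoids both colours has probability at least `1 / (4 * m ^ 2)`, by Bernoulli's
inequality `(1 - 2 / m) ^ |T| ≥ 1 / 4`. -/
lemma card_colorings_ge [Fintype V] {m : ℕ} (hm : 2 ≤ m) {b₁ b₂ : V} (hb : b₁ ≠ b₂)
    (T : Finset V) (h1 : b₁ ∉ T) (h2 : b₂ ∉ T) (hT : 8 * T.card ≤ 3 * m) :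
    m ^ Fintype.card V ≤ 4 * m ^ 2 * (Finset.univ.filter (fun c : V → Fin m =>
      (c b₁).val = 0 ∧ (c b₂).val = 1 ∧ ∀ u ∈ T, 2 ≤ (c u).val)).card := by
  let p : V → Fin m → Prop := fun v x =>
    (v = b₁ → x.val = 0) ∧ (v = b₂ → x.val = 1) ∧ (v ∈ T → 2 ≤ x.val)
  have hE : (Finset.univ.filter (fun c : V → Fin m =>
      (c b₁).val = 0 ∧ (c b₂).val = 1 ∧ ∀ u ∈ T, 2 ≤ (c u).val)).card
      = ∏ v, (Finset.univ.filter (p v)).card := by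
    refine Eq.trans ?_ (card_filter_pi p)
    congr 1
    ext c
    simp only [Finset.mem_filter, Finset.mem_univ, true_and, p]
    constructor
    · rintro ⟨h1, h2, h3⟩ v
      exact ⟨fun e => e ▸ h1, fun e => e ▸ h2, h3 v⟩
    · intro h
      exact ⟨(h b₁).1 rfl, (h b₂).2.1 rfl, fun u => (h u).2.2⟩
  have hm0 : (0 : ℝ) < m := by positivity
  have hm2 : (2 : ℝ) ≤ m := by exact_mod_cast hm
  -- Every factor is bounded below by `m` times a probability, in a form whose product splits.
  have hpt : ∀ v, (m : ℝ) * ((if v = b₁ then (1 / m : ℝ) else 1) *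
      ((if v = b₂ then (1 / m : ℝ) else 1) * (if v ∈ T then (1 - 2 / m : ℝ) else 1))) ≤
      ((Finset.univ.filter (p v)).card : ℝ) := by
    intro v
    by_cases e1 : v = b₁
    · subst e1
      have : 0 < (Finset.univ.filter (p v)).card :=
        Finset.card_pos.2 ⟨⟨0, by omega⟩, by simp [p, hb, h1]⟩
      have : (1 : ℝ) ≤ ((Finset.univ.filter (p v)).card : ℝ) := by exact_mod_cast this
      simpa [hb, h1, hm0.ne'] using this
    by_cases e2 : v = b₂
    · subst e2
      have : 0 < (Finset.univ.filter (p v)).card :=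
        Finset.card_pos.2 ⟨⟨1, by omega⟩, by simp [p, hb.symm, h2]⟩
      have : (1 : ℝ) ≤ ((Finset.univ.filter (p v)).card : ℝ) := by exact_mod_cast this
      simpa [hb.symm, h2, hm0.ne'] using this
    by_cases e3 : v ∈ T
    · have h := card_filter_val_ge_two m
      have : (m : ℝ) ≤ ((Finset.univ.filter (fun x : Fin m => 2 ≤ x.val)).card : ℝ) + 2 := by
        exact_mod_cast h
      have e : (m : ℝ) * (1 - 2 / m) = m - 2 := by field_simp
      simp only [p, e1, e2, e3, if_true, if_false, one_mul, false_imp_iff, true_imp_iff, true_and]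
      rw [e]
      linarith
    · simp [p, e1, e2, e3]
  have hnn : (0 : ℝ) ≤ 1 - 2 / m := by
    rw [sub_nonneg, div_le_one hm0]; exact hm2
  have hprod := Finset.prod_le_prod (s := (Finset.univ : Finset V)) (fun v _ => by
    split_ifs <;> positivity) (fun v _ => hpt v)
  have hbern : (1 / 4 : ℝ) ≤ (1 - 2 / m) ^ T.card := by
    have hb := one_add_mul_le_pow (a := (-(2 / m) : ℝ)) (by linarith) T.card
    have hT' : (8 : ℝ) * T.card ≤ 3 * m := by exact_mod_cast hT
    have : (T.card : ℝ) * (2 / m) ≤ 3 / 4 := by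
      rw [← mul_div_assoc, div_le_iff₀ hm0]; linarith
    rw [← sub_eq_add_neg] at hb
    linarith
  rw [Finset.prod_mul_distrib, Finset.prod_mul_distrib, Finset.prod_mul_distrib,
    Finset.prod_ite_eq' , Finset.prod_ite_eq', Finset.prod_ite_mem] at hprod
  simp only [Finset.prod_const, Finset.mem_univ, if_true, Finset.univ_inter,
    Finset.card_univ] at hprod
  have hE' : ((Finset.univ.filter (fun c : V → Fin m =>
      (c b₁).val = 0 ∧ (c b₂).val = 1 ∧ ∀ u ∈ T, 2 ≤ (c u).val)).card : ℝ)
      = ∏ v, ((Finset.univ.filter (p v)).card : ℝ) := by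
    rw [hE]; push_cast; rfl
  rw [← hE'] at hprod
  set E := (Finset.univ.filter (fun c : V → Fin m =>
      (c b₁).val = 0 ∧ (c b₂).val = 1 ∧ ∀ u ∈ T, 2 ≤ (c u).val)).card
  have hfin : (m : ℝ) ^ Fintype.card V ≤ 4 * m ^ 2 * (E : ℝ) := by
    have hp : (0 : ℝ) < (m : ℝ) ^ Fintype.card V := by positivity
    have h3 : (m : ℝ) ^ Fintype.card V * ((1 / m) * ((1 / m) * (1 / 4))) ≤ E :=
      le_trans (by gcongr) hprod
    have h4 := mul_le_mul_of_nonneg_left h3 (by positivity : (0 : ℝ) ≤ 4 * m ^ 2)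
    have h5 : 4 * (m : ℝ) ^ 2 * ((m : ℝ) ^ Fintype.card V * ((1 / m) * ((1 / m) * (1 / 4))))
        = (m : ℝ) ^ Fintype.card V := by field_simp
    linarith
  exact_mod_cast hfin

open Classical in
/-- In a random colouring, `v` gets one of the two colours `0`, `1` with probability at most `2 / m`. -/
lemma card_colorings_le [Fintype V] {m : ℕ} (v : V) :
    m * (Finset.univ.filter (fun c : V → Fin m => (c v).val < 2)).card
      ≤ 2 * m ^ Fintype.card V := by
  have hE : (Finset.univ.filter (fun c : V → Fin m => (c v).val < 2)).card
      = ∏ u, (Finset.univ.filter (fun x : Fin m => u = v → x.val < 2)).card := by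
    refine Eq.trans ?_ (card_filter_pi (fun u (x : Fin m) => u = v → x.val < 2))
    congr 1
    ext c
    simp
  rw [hE, ← Finset.mul_prod_erase _ _ (Finset.mem_univ v)]
  have h1 : (Finset.univ.filter (fun x : Fin m => v = v → x.val < 2)).card ≤ 2 := by
    simpa using card_filter_val_lt_two m
  have h2 : ∏ u ∈ Finset.univ.erase v,
      (Finset.univ.filter (fun x : Fin m => u = v → x.val < 2)).card
      ≤ m ^ (Fintype.card V - 1) := by
    refine (Finset.prod_le_pow_card _ _ m fun u _ => ?_).trans ?_
    · exact (Finset.card_le_univ _).trans (by simp)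
    · rw [Finset.card_erase_of_mem (Finset.mem_univ v), Finset.card_univ]
  have h3 : Fintype.card V = Fintype.card V - 1 + 1 := by
    have : 0 < Fintype.card V := Fintype.card_pos_iff.2 ⟨v⟩
    omega
  calc _ ≤ m * (2 * m ^ (Fintype.card V - 1)) := by gcongr
    _ = 2 * m ^ (Fintype.card V - 1 + 1) := by ring
    _ = _ := by rw [← h3]

/-! ### Clean links -/

/-- The colouring `c` makes `a` a clean link from `b₁` to `b₂`: these are neighbours of `a` in `S` of
colours `0` and `1`, and no further vertex of `S` that is adjacent to `a` or an out-neighbour of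
`b₁` or `b₂` has colour `0` or `1`. Vertices with colour at least `2` are the ones discarded. -/
def Good (G : SimpleGraph V) (S : Finset V) (out : V → Finset V) {m : ℕ} (c : V → Fin m)
    (a b₁ b₂ : V) : Prop :=
  b₁ ∈ S ∧ b₂ ∈ S ∧ G.Adj a b₁ ∧ G.Adj a b₂ ∧ (c b₁).val = 0 ∧ (c b₂).val = 1 ∧
    ∀ u ∈ S, (G.Adj a u ∨ u ∈ out b₁ ∨ u ∈ out b₂) → u ≠ b₁ → u ≠ b₂ → 2 ≤ (c u).val

/-- For fixed `a`, the links through `a` to different pairs are disjoint events. -/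
lemma Good.unique {G : SimpleGraph V} {S : Finset V} {out : V → Finset V} {m : ℕ}
    {c : V → Fin m} {a b₁ b₂ b₁' b₂' : V} (h : Good G S out c a b₁ b₂)
    (h' : Good G S out c a b₁' b₂') : b₁ = b₁' ∧ b₂ = b₂' := by
  obtain ⟨h1, h2, h3, h4, h5, h6, h7⟩ := h
  obtain ⟨h1', h2', h3', h4', h5', h6', -⟩ := h'
  constructor
  · by_contra hne
    by_cases e : b₁' = b₂
    · rw [e] at h5'; omega
    · have := h7 b₁' h1' (Or.inl h3') (Ne.symm hne) e
      omega
  · by_contra hne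
    by_cases e : b₂' = b₁
    · rw [e] at h6'; omega
    · have := h7 b₂' h2' (Or.inl h4') e (Ne.symm hne)
      omega

open Classical in
/-- A given pair of neighbours of `a` is linked by `a` with probability at least `1 / (4 * m ^ 2)`:
at most `4 * d + d + d` further vertices have to avoid the colours `0` and `1`. -/
lemma card_good_pair [Fintype V] {G : SimpleGraph V} {S : Finset V} {out : V → Finset V}
    {d m : ℕ} (hd : 2 ≤ d) (hm : m = 16 * d) (hout : ∀ v ∈ S, (out v).card ≤ d) {a b₁ b₂ : V}
    (ha : (S.filter (G.Adj a)).card ≤ 4 * d) (hb : b₁ ≠ b₂) (h1 : b₁ ∈ S) (h2 : b₂ ∈ S)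
    (h3 : G.Adj a b₁) (h4 : G.Adj a b₂) :
    m ^ Fintype.card V ≤ 4 * m ^ 2 *
      (Finset.univ.filter (fun c : V → Fin m => Good G S out c a b₁ b₂)).card := by
  let T : Finset V := (S.filter (fun u => G.Adj a u ∨ u ∈ out b₁ ∨ u ∈ out b₂)).filter
    (fun u => u ≠ b₁ ∧ u ≠ b₂)
  have hT : T ⊆ S.filter (G.Adj a) ∪ (out b₁ ∪ out b₂) := by
    intro u hu
    simp only [T, Finset.mem_filter, Finset.mem_union] at hu ⊢
    tauto
  have hTc : T.card ≤ 6 * d := by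
    have := Finset.card_le_card hT
    have := Finset.card_union_le (S.filter (G.Adj a)) (out b₁ ∪ out b₂)
    have := Finset.card_union_le (out b₁) (out b₂)
    have := hout b₁ h1
    have := hout b₂ h2
    omega
  refine (card_colorings_ge (m := m) (by omega) hb T (by simp [T]) (by simp [T])
    (by omega)).trans ?_
  refine Nat.mul_le_mul_left _ (Finset.card_le_card ?_)
  intro c hc
  simp only [Finset.mem_filter, Finset.mem_univ, true_and] at hc ⊢
  refine ⟨h1, h2, h3, h4, hc.1, hc.2.1, fun u hu hu' e1 e2 => hc.2.2 u ?_⟩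
  simp only [T, Finset.mem_filter]
  exact ⟨⟨hu, hu'⟩, e1, e2⟩

open Classical in
/-- Summing over the at least `d * (d - 1)` ordered pairs of neighbours, `a` is a clean link with
probability bounded below by the constant `1 / 2048`. -/
lemma card_good [Fintype V] {G : SimpleGraph V} {S : Finset V} {out : V → Finset V}
    {d m : ℕ} (hd : 2 ≤ d) (hm : m = 16 * d) (hout : ∀ v ∈ S, (out v).card ≤ d) {a : V}
    (ha : (S.filter (G.Adj a)).card ≤ 4 * d) (ha' : d ≤ (S.filter (G.Adj a)).card) :
    m ^ Fintype.card V ≤ 2048 *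
      (Finset.univ.filter (fun c : V → Fin m => ∃ b₁ b₂, Good G S out c a b₁ b₂)).card := by
  set N := S.filter (G.Adj a) with hN
  set E := (Finset.univ.filter (fun c : V → Fin m => ∃ b₁ b₂, Good G S out c a b₁ b₂)) with hE
  let e : V × V → Finset (V → Fin m) := fun p =>
    Finset.univ.filter (fun c : V → Fin m => Good G S out c a p.1 p.2)
  have h1 : ∑ p ∈ N.offDiag, (e p).card ≤ E.card := by
    rw [← Finset.card_biUnion]
    · refine Finset.card_le_card ?_
      intro c hc
      simp only [Finset.mem_biUnion, e, Finset.mem_filter, Finset.mem_univ, true_and] at hc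
      obtain ⟨p, -, hp⟩ := hc
      simp only [hE, Finset.mem_filter, Finset.mem_univ, true_and]
      exact ⟨p.1, p.2, hp⟩
    · intro p _ p' _ hne
      rw [Function.onFun, Finset.disjoint_left]
      intro c hc hc'
      simp only [e, Finset.mem_filter, Finset.mem_univ, true_and] at hc hc'
      exact hne (Prod.ext (hc.unique hc').1 (hc.unique hc').2)
  have h2 : ∀ p ∈ N.offDiag, m ^ Fintype.card V ≤ 4 * m ^ 2 * (e p).card := by
    intro p hp
    rw [Finset.mem_offDiag, hN, Finset.mem_filter, Finset.mem_filter] at hp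
    exact card_good_pair hd hm hout ha hp.2.2 hp.1.1 hp.2.1.1 hp.1.2 hp.2.1.2
  have h3 := Finset.card_nsmul_le_sum _ _ _ h2
  rw [← Finset.mul_sum, smul_eq_mul, Finset.offDiag_card] at h3
  have h4 : d * (d - 1) ≤ N.card * N.card - N.card := by
    rw [← Nat.mul_sub_one]
    exact Nat.mul_le_mul ha' (by omega)
  have h5 : d * (d - 1) * m ^ Fintype.card V ≤ 4 * m ^ 2 * E.card :=
    (Nat.mul_le_mul_right _ h4).trans (h3.trans (Nat.mul_le_mul_left _ h1))
  -- With `m = 16 * d` and `d ≥ 2`, `4 * m ^ 2 = 1024 * d ^ 2 ≤ 2048 * d * (d - 1)`.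
  have h6 : 4 * m ^ 2 ≤ d * (d - 1) * 2048 := by
    obtain ⟨r, rfl⟩ : ∃ r, d = r + 2 := ⟨d - 2, by omega⟩
    rw [hm, show r + 2 - 1 = r + 1 by omega]
    nlinarith
  have h7 : d * (d - 1) * m ^ Fintype.card V ≤ d * (d - 1) * (2048 * E.card) := by
    refine h5.trans ?_
    rw [← mul_assoc]
    exact Nat.mul_le_mul_right _ h6
  exact Nat.le_of_mul_le_mul_left h7 (Nat.mul_pos (by omega) (by omega))

open Classical in
/-- Averaging over the sample space `Ω`: the random subset of `A` given by `P` has expected size at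
least `|A| / 2048`, the one of `B` given by `R` at most `|B| / (8 * d)`. -/
lemma exists_sample {Ω : Type*} [Fintype Ω] [Nonempty Ω] (A B : Finset V) (P R : Ω → V → Prop)
    (Q d : ℕ)
    (hA : ∀ a ∈ A, Fintype.card Ω ≤ 2048 * (Finset.univ.filter (fun c => P c a)).card)
    (hB : ∀ v ∈ B, 8 * d * (Finset.univ.filter (fun c => R c v)).card ≤ Fintype.card Ω)
    (hAB : 256 * Q * B.card < d * A.card) :
    ∃ c, Q * (B.filter (R c)).card < (A.filter (P c)).card := by
  by_contra! hcon
  have hs : ∀ (X : Finset V) (W : Ω → V → Prop),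
      ∑ c, (X.filter (W c)).card = ∑ v ∈ X, (Finset.univ.filter (fun c => W c v)).card :=
    fun X W => Finset.sum_card_bipartiteAbove_eq_sum_card_bipartiteBelow W
  have h1 := Finset.sum_le_sum (s := Finset.univ) (fun c _ => hcon c)
  rw [← Finset.mul_sum, hs, hs] at h1
  have h2 := Finset.sum_le_sum hA
  have h3 := Finset.sum_le_sum hB
  rw [← Finset.mul_sum] at h2 h3
  simp only [Finset.sum_const, smul_eq_mul] at h2 h3
  have hpos : 0 < Fintype.card Ω := Fintype.card_pos
  set a := ∑ v ∈ A, (Finset.univ.filter (fun c => P c v)).card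
  set b := ∑ v ∈ B, (Finset.univ.filter (fun c => R c v)).card
  have h4 : 8 * (d * A.card) * Fintype.card Ω ≤ 8 * (256 * Q * B.card) * Fintype.card Ω :=
    calc 8 * (d * A.card) * Fintype.card Ω = 8 * d * (A.card * Fintype.card Ω) := by ring
      _ ≤ 8 * d * (2048 * (Q * b)) := Nat.mul_le_mul_left _ (h2.trans (Nat.mul_le_mul_left _ h1))
      _ = 2048 * Q * (8 * d * b) := by ring
      _ ≤ 2048 * Q * (B.card * Fintype.card Ω) := by gcongr
      _ = _ := by ring
  have := Nat.le_of_mul_le_mul_right h4 hpos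
  omega

/-! ### The link graph -/

/-- The graph in which two vertices are adjacent when some `a ∈ A` is a clean link between them. It
is bipartite, with parts given by the colours `0` and `1`, and its subdivision sits in `G`. -/
def linkGraph (G : SimpleGraph V) (S : Finset V) (out : V → Finset V) {m : ℕ} (c : V → Fin m)
    (A : Finset V) : SimpleGraph V :=
  SimpleGraph.fromRel fun x y => ∃ a ∈ A, Good G S out c a x y

lemma linkGraph_adj {G : SimpleGraph V} {S : Finset V} {out : V → Finset V} {m : ℕ}
    {c : V → Fin m} {A : Finset V} {x y : V} (h : (linkGraph G S out c A).Adj x y) :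
    ((c x).val = 0 ↔ ¬ (c y).val = 0) ∧ ∃ a ∈ A, x ∈ S ∧ G.Adj a x ∧ G.Adj a y ∧
      (c x).val < 2 ∧ ∀ u ∈ S, (G.Adj a u ∨ u ∈ out x ∨ u ∈ out y) → (c u).val < 2 →
        u = x ∨ u = y := by
  rw [linkGraph, SimpleGraph.fromRel_adj] at h
  obtain ⟨-, ⟨a, ha, h1, h2, h3, h4, h5, h6, h7⟩ | ⟨a, ha, h1, h2, h3, h4, h5, h6, h7⟩⟩ := h
  · refine ⟨by omega, a, ha, h1, h3, h4, by omega, fun u hu hu' hc => ?_⟩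
    by_contra! hne
    have := h7 u hu hu' hne.1 hne.2
    omega
  · refine ⟨by omega, a, ha, h2, h4, h3, by omega, fun u hu hu' hc => ?_⟩
    by_contra! hne
    have := h7 u hu (by tauto) hne.2 hne.1
    omega

open Classical in
/-- A clean link `a` determines an edge of the link graph, and distinct `a` give distinct edges since
`G` has no four-cycle; a degenerate link graph therefore has few clean links. -/
lemma card_good_le_of_degen {G : SimpleGraph V}
    (htri : ∀ a b c, G.Adj a b → G.Adj a c → ¬ G.Adj b c)
    (h4 : IsEmpty (cycleGraph 4 ↪g G)) {S A : Finset V} {out : V → Finset V} {m : ℕ}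
    {c : V → Fin m} (hA : ∀ u ∈ A, ∀ v ∈ A, ¬ G.Adj u v) {q : ℕ}
    (hF : Degen (linkGraph G S out c A) ((S \ A).filter (fun v => (c v).val < 2)) q) :
    (A.filter (fun a => ∃ b₁ b₂, Good G S out c a b₁ b₂)).card ≤
      2 * q * ((S \ A).filter (fun v => (c v).val < 2)).card := by
  set B := (S \ A).filter (fun v => (c v).val < 2) with hB
  set F := linkGraph G S out c A with hFdef
  obtain ⟨o, ho, hadj⟩ := Degen.orient B hF
  refine le_trans ?_ (sum_degree_le_of_orient B o ho hadj)
  rw [← Finset.card_sigma]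
  have hch : ∀ a, ∃ p : V × V, (∃ b₁ b₂, Good G S out c a b₁ b₂) → Good G S out c a p.1 p.2 := by
    intro a
    by_cases h : ∃ b₁ b₂, Good G S out c a b₁ b₂
    · obtain ⟨b₁, b₂, h⟩ := h
      exact ⟨(b₁, b₂), fun _ => h⟩
    · exact ⟨(a, a), fun h' => absurd h' h⟩
  choose f hf using hch
  refine Finset.card_le_card_of_injOn (fun a => ⟨(f a).1, (f a).2⟩) ?_ ?_
  · intro a ha
    have ha' := Finset.mem_filter.1 (Finset.mem_coe.1 ha)
    have hg := hf a ha'.2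
    obtain ⟨h1, h2, h3, h4, h5, h6, -⟩ := id hg
    have n1 : (f a).1 ∉ A := fun h => hA a ha'.1 _ h h3
    have n2 : (f a).2 ∉ A := fun h => hA a ha'.1 _ h h4
    simp only [Finset.coe_sigma, Set.mem_sigma_iff, Finset.mem_coe, Finset.mem_filter, hB,
      Finset.mem_sdiff]
    refine ⟨⟨⟨h1, n1⟩, by omega⟩, ⟨⟨h2, n2⟩, by omega⟩, ?_⟩
    rw [hFdef, linkGraph, SimpleGraph.fromRel_adj]
    refine ⟨fun e => ?_, Or.inl ⟨a, ha'.1, hg⟩⟩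
    rw [e] at h5
    omega
  · intro a ha a' ha' e
    have hg := hf a (Finset.mem_filter.1 (Finset.mem_coe.1 ha)).2
    have hg' := hf a' (Finset.mem_filter.1 (Finset.mem_coe.1 ha')).2
    simp only [Sigma.mk.injEq, heq_eq_eq] at e
    rw [← e.1, ← e.2] at hg'
    by_contra hne
    obtain ⟨-, -, h3, h4', h5, h6, -⟩ := hg
    obtain ⟨-, -, h3', h4'', -, -, -⟩ := hg'
    refine no_four_cycle htri h4 hne (b := (f a).1) (b' := (f a).2) (fun e => ?_) h3 h4' h3' h4''
    rw [e] at h5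
    omega

/-- A cycle of the link graph, subdivided by its linking vertices, is an induced cycle of `G`. If
`g y` were an out-neighbour of `g x` in `G`, cleanness of the link `a x` would force `g y` to be
its second end, giving a triangle with `a x`. -/
lemma exists_induced_cycle_of_link [Fintype V] {G : SimpleGraph V}
    (htri : ∀ a b c, G.Adj a b → G.Adj a c → ¬ G.Adj b c) {S A : Finset V}
    {out : V → Finset V} (hout : ∀ u ∈ S, ∀ v ∈ S, G.Adj u v → v ∈ out u ∨ u ∈ out v) {m : ℕ}
    {c : V → Fin m} (hA : ∀ u ∈ A, ∀ v ∈ A, ¬ G.Adj u v) {L : ℕ} (hL : 3 ≤ L) {g : ℕ → V}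
    (hg : Set.InjOn g (Set.Iio L))
    (hadj : ∀ x, x + 1 < L → (linkGraph G S out c A).Adj (g x) (g (x + 1)))
    (hlast : (linkGraph G S out c A).Adj (g (L - 1)) (g 0)) :
    Nonempty (cycleGraph (2 * L) ↪g G) := by
  have hF : ∀ x, ∃ a, x < L → a ∈ A ∧ g x ∈ S ∧ G.Adj a (g x) ∧ G.Adj a (g ((x + 1) % L)) ∧
      (c (g x)).val < 2 ∧ ∀ u ∈ S, (G.Adj a u ∨ u ∈ out (g x) ∨ u ∈ out (g ((x + 1) % L))) →
        (c u).val < 2 → u = g x ∨ u = g ((x + 1) % L) := by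
    intro x
    by_cases hx : x < L
    · have : (linkGraph G S out c A).Adj (g x) (g ((x + 1) % L)) := by
        by_cases h : x + 1 < L
        · rw [Nat.mod_eq_of_lt h]; exact hadj x h
        · have e : x = L - 1 := by omega
          rw [show x + 1 = L by omega, Nat.mod_self, e]; exact hlast
      obtain ⟨-, a, ha⟩ := linkGraph_adj this
      exact ⟨a, fun _ => ha⟩
    · exact ⟨g x, fun h => absurd h hx⟩
  choose a ha using hF
  have hlt : ∀ x, (x + 1) % L < L := fun x => Nat.mod_lt _ (by omega)
  refine exists_embedding_of_subdivision hL g a hg ?_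
    (fun x hx y hy => hA _ (ha x hx).1 _ (ha y hy).1) ?_
  · have key : ∀ x < L, ∀ y < L, G.Adj (g x) (g y) → g y ∉ out (g x) := by
      intro x hx y hy hxy ho
      obtain ⟨-, -, h1, h2, -, h3⟩ := ha x hx
      obtain ⟨-, hyS, -, -, hyc, -⟩ := ha y hy
      rcases h3 (g y) hyS (Or.inr (Or.inl ho)) hyc with e | e
      · exact hxy.ne e.symm
      · rw [← e] at h2
        exact htri _ _ _ h1 h2 hxy
    intro x hx y hy hxy
    rcases hout _ (ha x hx).2.1 _ (ha y hy).2.1 hxy with h | h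
    · exact key x hx y hy hxy h
    · exact key y hy x hx hxy.symm h
  · intro x hx y hy
    obtain ⟨-, -, h1, h2, -, h3⟩ := ha x hx
    constructor
    · intro h
      rcases h3 (g y) (ha y hy).2.1 (Or.inl h) (ha y hy).2.2.2.2.1 with e | e
      · exact Or.inl (hg hy hx e)
      · exact Or.inr (hg hy (hlt x) e)
    · rintro (rfl | rfl)
      · exact h1
      · exact h2

open Classical in
/-- The constants: `Q₀` is the degree of the link graph that yields a cycle of length divisible by
`k`; a link graph of degeneracy `Q₀` has at most `2 * Q₀` clean links per vertex; `M` is the gain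
over the greedy independent set needed to beat this; `D` makes the degeneracy large enough for
that gain. -/
lemma colorable_of_no_induced [Fintype V] {G : SimpleGraph V} {k : ℕ} (hk : 0 < k)
    (h3 : G.CliqueFree 3) (h4 : IsEmpty (cycleGraph 4 ↪g G))
    (hcyc : ∀ n, 3 ≤ n → k ∣ n → IsEmpty (cycleGraph n ↪g G)) {Q₀ M D : ℕ}
    (hQ : Q₀ = 4 * (2 * k + 5)) (hM : M = 4096 * (2 * Q₀) + 1)
    (hD : D = M * (1 + 2 ^ (4 * M)) + 2) : G.Colorable (D + 1) := by
  by_contra hcol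
  have htri : ∀ a b c, G.Adj a b → G.Adj a c → ¬ G.Adj b c := fun a b c hab hac hbc =>
    h3 {a, b, c} (SimpleGraph.is3Clique_triple_iff.2 ⟨hab, hac, hbc⟩)
  obtain ⟨d, hd, S, hS, hdeg, hmin⟩ := exists_core hcol
  obtain ⟨out, ho, hor⟩ := Degen.orient S hdeg
  have hsum := sum_degree_le_of_orient S out ho hor
  set A₀ := S.filter (fun v => (S.filter (G.Adj v)).card ≤ 4 * d) with hA₀
  -- At most half of the vertices of `S` have degree more than `4 * d`, twice the average bound.
  have hhalf : S.card ≤ 2 * A₀.card := by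
    have h1 : (S \ A₀).card + A₀.card = S.card :=
      Finset.card_sdiff_add_card_eq_card (Finset.filter_subset _ _)
    have h2 : (S \ A₀).card * (4 * d) ≤ 2 * d * S.card := by
      refine le_trans ?_ hsum
      refine le_trans ?_ (Finset.sum_le_sum_of_subset (Finset.sdiff_subset (t := A₀)))
      refine Finset.card_nsmul_le_sum _ _ _ fun v hv => ?_
      rw [Finset.mem_sdiff, hA₀, Finset.mem_filter] at hv
      exact (not_le.1 fun h => hv.2 ⟨hv.1, h⟩).le
    have h3 : (2 * d) * (2 * (S \ A₀).card) ≤ 2 * d * S.card :=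
      le_trans (le_of_eq (by ring)) h2
    have h4 := Nat.le_of_mul_le_mul_left h3 (by omega)
    omega
  obtain ⟨A, hAsub, hA, hAcard⟩ := exists_indep h3 A₀ M (4 * d) (by omega) (fun v hv =>
    (Finset.card_le_card (Finset.filter_subset_filter _ (Finset.filter_subset _ _))).trans
      (Finset.mem_filter.1 hv).2)
  have hSpos : 0 < S.card := hS.card_pos
  have hbig : 256 * (2 * Q₀) * S.card < d * A.card := by
    have h1 : M * S.card ≤ 16 * (d * A.card) :=
      calc M * S.card ≤ M * (2 * A₀.card) := by gcongr
        _ = 2 * (M * A₀.card) := by ring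
        _ ≤ 2 * (2 * (4 * d) * A.card) := by gcongr
        _ = _ := by ring
    rw [hM] at h1
    nlinarith
  obtain ⟨m, hm⟩ : ∃ m, m = 16 * d := ⟨_, rfl⟩
  have : Nonempty (V → Fin m) := ⟨fun _ => ⟨0, by omega⟩⟩
  have hcardΩ : Fintype.card (V → Fin m) = m ^ Fintype.card V := by simp
  obtain ⟨c, hc⟩ := exists_sample A (S \ A)
    (fun (c : V → Fin m) a => ∃ b₁ b₂, Good G S out c a b₁ b₂)
    (fun c v => (c v).val < 2) (2 * Q₀) d
    (fun a ha => by
      have h := Finset.mem_filter.1 (hAsub ha)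
      rw [hcardΩ]
      convert card_good (by omega) hm ho h.2 (hmin a h.1))
    (fun v _ => by
      rw [hcardΩ]
      have h := card_colorings_le (m := m) v
      have h2 : ∀ X Y : ℕ, m * X ≤ 2 * Y → 8 * d * X ≤ Y := by
        intro X Y h
        rw [hm] at h
        linarith
      convert h2 _ _ h)
    (lt_of_le_of_lt (Nat.mul_le_mul_left _ (Finset.card_le_card Finset.sdiff_subset)) hbig)
  by_cases hF : Degen (linkGraph G S out c A) ((S \ A).filter (fun v => (c v).val < 2)) Q₀
  · have hle := card_good_le_of_degen htri h4 hA hF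
    refine absurd hc (Nat.not_lt.2 ?_)
    convert hle
  · unfold Degen at hF
    push Not at hF
    obtain ⟨T, -, hT, hTdeg⟩ := hF
    obtain ⟨L, hL, hkL, g, hg, hg1, hg2⟩ := exists_cycle_of_degree hk
      (fun x => decide ((c x).val = 0)) (F := linkGraph G S out c A) (fun x y h => by
        have := (linkGraph_adj h).1
        simp only [ne_eq, decide_eq_decide]
        tauto) T hT (fun v hv => hQ ▸ hTdeg v hv)
    obtain ⟨e⟩ := exists_induced_cycle_of_link htri hor hA hL hg hg1 hg2
    exact (hcyc (2 * L) (by omega) (hkL.mul_left 2)).elim e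

end CycMod

/-- For every positive integer `k` there is a constant `t` bounding the
chromatic number of every graph with no triangle, no induced `C_4`, and no induced cycle
of length divisible by `k`. -/
theorem chi_bounded_no_triangle_no_C4_no_cycle_div_k (k : ℕ) (hk : 0 < k) :
    ∃ t : ℕ, ∀ (V : Type) [Fintype V] (G : SimpleGraph V),
      G.CliqueFree 3 → NoInducedCycle G 4 →
      (∀ n : ℕ, 3 ≤ n → k ∣ n → NoInducedCycle G n) →
      chi G ≤ t := by
  obtain ⟨Q₀, hQ⟩ : ∃ Q₀, Q₀ = 4 * (2 * k + 5) := ⟨_, rfl⟩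
  obtain ⟨M, hM⟩ : ∃ M, M = 4096 * (2 * Q₀) + 1 := ⟨_, rfl⟩
  obtain ⟨D, hD⟩ : ∃ D, D = M * (1 + 2 ^ (4 * M)) + 2 := ⟨_, rfl⟩
  refine ⟨D + 1, fun V _ G h3 h4 hcyc => ?_⟩
  have h := (CycMod.colorable_of_no_induced hk h3 h4 hcyc hQ hM hD).chromaticNumber_le
  exact ENat.toNat_le_of_le_natCast h
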